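/- Let $U_1, U_2, U_3$ be subspaces of a finite-dimensional vector space $V$ and $i, j, k$ nonnegative integers. The quantity $\max$(number of linearly independent vectors choosable with at most $i$ from $U_1$, $j$ from $U_2$, $k$ from $U_3$) equals $\min_{I}\left[\dim\left(\sum_{m \in I} W_m\right) + (i+j+k) - |I|\right]$ where $W_1,\ldots,W_{i+j+k}$ is the multiset consisting of $i$ copies of $U_1$, $j$ copies of $U_2$, and $k$ copies of $U_3$, and $I$ ranges over subsets of indices. Moreover, the minimum is attained at some $I$ that contains all or none of the indices of each repeated block. -/

import Mathlib

/-- The set of numbers `g` such that one can choose `g` linearly independent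
vectors with at most `i` from `U₁`, `j` from `U₂`, `k` from `U₃`. -/
def indepChoiceSet {F V : Type*} [Field F] [AddCommGroup V] [Module F V]
    (U₁ U₂ U₃ : Submodule F V) (i j k : ℕ) : Set ℕ :=
  {g | ∃ (v : Fin g → V) (c : Fin g → Fin 3),
    (∀ a, c a = 0 → v a ∈ U₁) ∧ (∀ a, c a = 1 → v a ∈ U₂) ∧
    (∀ a, c a = 2 → v a ∈ U₃) ∧
    (Finset.univ.filter fun a => c a = 0).card ≤ i ∧
    (Finset.univ.filter fun a => c a = 1).card ≤ j ∧
    (Finset.univ.filter fun a => c a = 2).card ≤ k ∧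
    LinearIndependent F v}

/-- The multiset `W` consisting of `i` copies of `U₁`, `j` copies of `U₂` and
`k` copies of `U₃`, indexed by `Fin (i+j+k)`. -/
def repeatedSubspaces {F V : Type*} [Field F] [AddCommGroup V] [Module F V]
    (U₁ U₂ U₃ : Submodule F V) (i j : ℕ) {r : ℕ} : Fin r → Submodule F V :=
  fun m => if (m : ℕ) < i then U₁ else if (m : ℕ) < i + j then U₂ else U₃

/-!
For a family `W` of `r` subspaces, the function `f I = dim (∑ m ∈ I, W m) + (r - #I)` bounds every
independent partial transversal from above. For the converse, suppose `g ≤ f` and split a subspace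
`W m` of dimension at least two as `A ⊔ B` with `A`, `B` proper: by modularity of the dimension,
replacing `W m` by one of the two preserves the bound `g ≤ f`. Iterating leads to subspaces of
dimension at most one, whose generators span a space of dimension at least `g`. Finally, enlarging
a minimizer `I` to all `m` with `W m ≤ ∑ n ∈ I, W n` does not increase `f`, and the enlarged set is
a union of blocks of equal subspaces.
-/

section Lattice

open Finset

variable {ι α : Type*} [DecidableEq ι] [CompleteLattice α]

theorem iSup_union_le_iSup_update_sup_iSup_update {W : ι → α} {m : ι} {A B : α}
    (hAB : W m ≤ A ⊔ B) {I J : Finset ι} (hI : m ∈ I) (hJ : m ∈ J) :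
    ⨆ a ∈ I ∪ J, W a ≤
      (⨆ a ∈ I, Function.update W m A a) ⊔ ⨆ a ∈ J, Function.update W m B a := by
  have le_iSup_update {C : α} {L : Finset ι} {a : ι} (ha : a ∈ L) :
      Function.update W m C a ≤ ⨆ a ∈ L, Function.update W m C a :=
    le_iSup₂ (f := fun a (_ : a ∈ L) ↦ Function.update W m C a) a ha
  refine iSup₂_le fun a ha ↦ ?_
  obtain rfl | ham := eq_or_ne a m
  · refine hAB.trans (sup_le_sup ?_ ?_)
    · simpa only [Function.update_self] using le_iSup_update (C := A) hI
    · simpa only [Function.update_self] using le_iSup_update (C := B) hJ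
  · rcases mem_union.1 ha with ha | ha
    · refine le_sup_of_le_left ?_
      simpa only [Function.update_of_ne ham] using le_iSup_update (C := A) ha
    · refine le_sup_of_le_right ?_
      simpa only [Function.update_of_ne ham] using le_iSup_update (C := B) ha

theorem iSup_erase_le_iSup_update (W : ι → α) (m : ι) (A : α) (I : Finset ι) :
    ⨆ a ∈ I.erase m, W a ≤ ⨆ a ∈ I, Function.update W m A a := by
  refine iSup₂_le fun a ha ↦ ?_
  obtain ⟨ham, haI⟩ := mem_erase.1 ha
  exact le_iSup₂_of_le a haI (Function.update_of_ne ham A W).ge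

end Lattice

section Konig

open Finset Module

variable {K V ι : Type*} [DivisionRing K] [AddCommGroup V] [Module K V]

/-- The sizes of independent partial transversals of the family `W`: sets of linearly independent
vectors which represent pairwise distinct members of the family, as recorded by the embedding `e`
into the index type. -/
def indepTransversalSizes (W : ι → Submodule K V) : Set ℕ :=
  {g | ∃ (e : Fin g ↪ ι) (v : Fin g → V), (∀ a, v a ∈ W (e a)) ∧ LinearIndependent K v}

theorem card_filter_mem_le_finrank_iSup {α : Type*} [Fintype α] [DecidableEq ι]
    {W : ι → Submodule K V} [∀ m, FiniteDimensional K (W m)] {e : α → ι} {v : α → V}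
    (hv : ∀ a, v a ∈ W (e a)) (hli : LinearIndependent K v) (I : Finset ι) :
    #{a | e a ∈ I} ≤ finrank K ↥(⨆ m ∈ I, W m) := by
  have hspan : Submodule.span K (Set.range fun a : {a // e a ∈ I} ↦ v a) ≤ ⨆ m ∈ I, W m := by
    rw [Submodule.span_le, Set.range_subset_iff]
    exact fun a ↦ le_iSup₂ (f := fun m (_ : m ∈ I) ↦ W m) (e a) a.2 (hv a)
  have : FiniteDimensional K ↥(⨆ m ∈ I, W m) :=
    sup_eq_iSup I W ▸ Submodule.finiteDimensional_finset_sup I W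
  rw [← Fintype.card_subtype,
    ← finrank_span_eq_card (hli.comp (Subtype.val : {a // e a ∈ I} → α) Subtype.val_injective)]
  exact Submodule.finrank_mono hspan

theorem mem_indepTransversalSizes_of_le_finrank_span [Finite ι] {W : ι → Submodule K V} {v : ι → V}
    (hv : ∀ m, v m ∈ W m) {g : ℕ} (hg : g ≤ finrank K (Submodule.span K (Set.range v))) :
    g ∈ indepTransversalSizes W := by
  obtain ⟨κ, b, hb, hspan, hli⟩ := exists_linearIndependent' K v
  have := Finite.of_injective b hb
  have := Fintype.ofFinite κ
  rw [← hspan, finrank_span_eq_card hli] at hg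
  obtain ⟨f⟩ : Nonempty (Fin g ↪ κ) :=
    Function.Embedding.nonempty_of_card_le (by rwa [Fintype.card_fin])
  exact ⟨f.trans ⟨b, hb⟩, v ∘ b ∘ f, fun a ↦ hv (b (f a)), hli.comp f f.injective⟩

theorem exists_lt_lt_sup_eq_of_not_isPrincipal {W : Submodule K V} (hW : ¬ W.IsPrincipal) :
    ∃ A < W, ∃ B < W, A ⊔ B = W := by
  obtain ⟨x, hxW, hx0⟩ := W.exists_mem_ne_zero_of_ne_bot fun h ↦ hW (h ▸ inferInstance)
  obtain ⟨C, hC⟩ := Submodule.exists_isCompl (K ∙ x)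
  have hx : K ∙ x ≤ W := (Submodule.span_singleton_le_iff_mem x W).2 hxW
  refine ⟨K ∙ x, hx.lt_of_ne fun h ↦ hW ⟨x, h.symm⟩, C ⊓ W, inf_lt_right.2 fun h ↦ hx0 ?_, ?_⟩
  · exact Submodule.disjoint_def.1 hC.disjoint x (Submodule.mem_span_singleton_self x) (h hxW)
  · rw [← sup_inf_assoc_of_le C hx, hC.sup_eq_top, top_inf_eq]

variable [Fintype ι]

/-- The quantity `dim (∑ m ∈ I, W m) + r - #I` minimized in the vector-space König theorem, for a
family of `r` subspaces. The truncated subtraction is exact, since `#I ≤ r`. -/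
noncomputable def konigValue (W : ι → Submodule K V) (I : Finset ι) : ℕ :=
  finrank K ↥(⨆ m ∈ I, W m) + (Fintype.card ι - #I)

theorem konigValue_add_card (W : ι → Submodule K V) (I : Finset ι) :
    konigValue W I + #I = finrank K ↥(⨆ m ∈ I, W m) + Fintype.card ι := by
  rw [konigValue, add_assoc, Nat.sub_add_cancel I.card_le_univ]

theorem konigValue_update_of_notMem [DecidableEq ι] {W : ι → Submodule K V} {m : ι}
    {I : Finset ι} (hm : m ∉ I) (A : Submodule K V) :
    konigValue (Function.update W m A) I = konigValue W I := by
  have hW : ∀ a ∈ I, Function.update W m A a = W a := fun a ha ↦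
    Function.update_of_ne (ne_of_mem_of_not_mem ha hm) A W
  rw [konigValue, konigValue, biSup_congr hW]

theorem le_konigValue_of_mem_indepTransversalSizes {W : ι → Submodule K V}
    [∀ m, FiniteDimensional K (W m)] {g : ℕ} (hg : g ∈ indepTransversalSizes W) (I : Finset ι) :
    g ≤ konigValue W I := by
  classical
  obtain ⟨e, v, hv, hli⟩ := hg
  have hin := card_filter_mem_le_finrank_iSup hv hli I
  have hout : #{a | e a ∉ I} ≤ Fintype.card ι - #I := by
    rw [← card_compl]
    exact card_le_card_of_injOn e (fun a ha ↦ by simpa using ha) e.injective.injOn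
  calc g = #{a | e a ∈ I} + #{a | e a ∉ I} := by
        rw [card_filter_add_card_filter_not, card_univ, Fintype.card_fin]
    _ ≤ konigValue W I := add_le_add hin hout

theorem konigValue_union_add_konigValue_erase_inter_le [DecidableEq ι] {W : ι → Submodule K V}
    [∀ m, FiniteDimensional K (W m)] {m : ι} {A B : Submodule K V} (hAB : A ⊔ B = W m)
    {I J : Finset ι} (hI : m ∈ I) (hJ : m ∈ J) :
    konigValue W (I ∪ J) + konigValue W ((I ∩ J).erase m) ≤
      konigValue (Function.update W m A) I + konigValue (Function.update W m B) J + 1 := by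
  have finiteDimensional_update {C : Submodule K V} (hC : C ≤ W m) (a : ι) :
      FiniteDimensional K (Function.update W m C a) :=
    Submodule.finiteDimensional_of_le (update_le_self_iff.2 hC a)
  have := finiteDimensional_update (hAB ▸ le_sup_left : A ≤ W m)
  have := finiteDimensional_update (hAB ▸ le_sup_right : B ≤ W m)
  have hunion := Submodule.finrank_mono
    (iSup_union_le_iSup_update_sup_iSup_update hAB.ge hI hJ)
  have hinter := Submodule.finrank_mono <| le_inf
    ((biSup_mono fun _ ↦ (erase_subset_erase m inter_subset_left ·)).trans
      (iSup_erase_le_iSup_update W m A I))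
    ((biSup_mono fun _ ↦ (erase_subset_erase m inter_subset_right ·)).trans
      (iSup_erase_le_iSup_update W m B J))
  have hmodular := Submodule.finrank_sup_add_finrank_inf_eq
    (⨆ a ∈ I, Function.update W m A a) (⨆ a ∈ J, Function.update W m B a)
  have hcard : #(I ∪ J) + #((I ∩ J).erase m) + 1 = #I + #J := by
    rw [add_assoc, card_erase_add_one (mem_inter.2 ⟨hI, hJ⟩), card_union_add_card_inter]
  have hvalueI := konigValue_add_card (Function.update W m A) I
  have hvalueJ := konigValue_add_card (Function.update W m B) J
  have hvalue_union := konigValue_add_card W (I ∪ J)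
  have hvalue_inter := konigValue_add_card W ((I ∩ J).erase m)
  omega

theorem forall_le_konigValue_update_or [DecidableEq ι] {W : ι → Submodule K V}
    [∀ m, FiniteDimensional K (W m)] {g : ℕ} (hW : ∀ I, g ≤ konigValue W I) {m : ι}
    {A B : Submodule K V} (hAB : A ⊔ B = W m) :
    (∀ I, g ≤ konigValue (Function.update W m A) I) ∨
      ∀ I, g ≤ konigValue (Function.update W m B) I := by
  by_contra! ⟨⟨I, hI⟩, ⟨J, hJ⟩⟩
  have mem_of_lt {C : Submodule K V} {L : Finset ι}
      (hL : konigValue (Function.update W m C) L < g) : m ∈ L := by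
    by_contra hm
    exact (hW L).not_gt (konigValue_update_of_notMem hm C ▸ hL)
  have hsub := konigValue_union_add_konigValue_erase_inter_le hAB (mem_of_lt hI) (mem_of_lt hJ)
  have hunion := hW (I ∪ J)
  have hinter := hW ((I ∩ J).erase m)
  omega

theorem exists_le_finrank_span_of_forall_isPrincipal {W : ι → Submodule K V}
    (hprinc : ∀ m, (W m).IsPrincipal) {g : ℕ} (hg : g ≤ konigValue W univ) :
    ∃ v : ι → V, (∀ m, v m ∈ W m) ∧ g ≤ finrank K (Submodule.span K (Set.range v)) := by
  choose v hv using fun m ↦ (hprinc m).principal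
  refine ⟨v, fun m ↦ hv m ▸ Submodule.mem_span_singleton_self (v m), ?_⟩
  have hspan : ⨆ m ∈ (univ : Finset ι), W m = Submodule.span K (Set.range v) := by
    simp only [mem_univ, iSup_pos, Submodule.span_range_eq_iSup, ← hv]
  rwa [konigValue, hspan, card_univ, Nat.sub_self, add_zero] at hg

theorem exists_le_finrank_span_of_forall_le_konigValue (W : ι → Submodule K V)
    [∀ m, FiniteDimensional K (W m)] {g : ℕ} (hW : ∀ I, g ≤ konigValue W I) :
    ∃ v : ι → V, (∀ m, v m ∈ W m) ∧ g ≤ finrank K (Submodule.span K (Set.range v)) := by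
  classical
  induction hn : ∑ m, finrank K (W m) using Nat.strong_induction_on generalizing W with
  | _ n ih =>
  by_cases hprinc : ∀ m, (W m).IsPrincipal
  · exact exists_le_finrank_span_of_forall_isPrincipal hprinc (hW univ)
  push Not at hprinc
  obtain ⟨m, hm⟩ := hprinc
  have of_update {A : Submodule K V} (hA : A < W m)
      (hWA : ∀ I, g ≤ konigValue (Function.update W m A) I) :
      ∃ v : ι → V, (∀ m, v m ∈ W m) ∧ g ≤ finrank K (Submodule.span K (Set.range v)) := by
    have hle : Function.update W m A ≤ W := update_le_self_iff.2 hA.le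
    have (a : ι) : FiniteDimensional K (Function.update W m A a) :=
      Submodule.finiteDimensional_of_le (hle a)
    have hlt : ∑ a, finrank K (Function.update W m A a) < n := by
      refine hn ▸ sum_lt_sum (fun a _ ↦ Submodule.finrank_mono (hle a)) ⟨m, mem_univ m, ?_⟩
      exact Submodule.finrank_lt_finrank_of_lt (by rwa [Function.update_self])
    obtain ⟨v, hv, hgv⟩ := ih _ hlt _ hWA rfl
    exact ⟨v, fun a ↦ hle a (hv a), hgv⟩
  obtain ⟨A, hA, B, hB, hAB⟩ := exists_lt_lt_sup_eq_of_not_isPrincipal hm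
  exact (forall_le_konigValue_update_or hW hAB).elim (of_update hA) (of_update hB)

theorem isGreatest_indepTransversalSizes (W : ι → Submodule K V)
    [∀ m, FiniteDimensional K (W m)] :
    IsGreatest (indepTransversalSizes W) (univ.inf' univ_nonempty (konigValue W)) := by
  refine ⟨?_, fun g hg ↦ le_inf' _ _ fun I _ ↦ le_konigValue_of_mem_indepTransversalSizes hg I⟩
  obtain ⟨v, hv, hle⟩ := exists_le_finrank_span_of_forall_le_konigValue W
    (g := univ.inf' univ_nonempty (konigValue W)) fun I ↦ inf'_le _ (mem_univ I)
  exact mem_indepTransversalSizes_of_le_finrank_span hv hle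

theorem exists_closed_konigValue_le (W : ι → Submodule K V) (I : Finset ι) :
    ∃ J, konigValue W J ≤ konigValue W I ∧ ∀ a, a ∈ J ↔ W a ≤ ⨆ m ∈ J, W m := by
  classical
  let J : Finset ι := {a | W a ≤ ⨆ m ∈ I, W m}
  have mem_J (a : ι) : a ∈ J ↔ W a ≤ ⨆ m ∈ I, W m := by simp [J]
  have hIJ : I ⊆ J := fun a ha ↦ (mem_J a).2 (le_iSup₂ (f := fun m (_ : m ∈ I) ↦ W m) a ha)
  have hsup : ⨆ m ∈ J, W m = ⨆ m ∈ I, W m :=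
    le_antisymm (iSup₂_le fun a ha ↦ (mem_J a).1 ha) (biSup_mono fun _ ha ↦ hIJ ha)
  refine ⟨J, ?_, hsup ▸ mem_J⟩
  rw [konigValue, konigValue, hsup]
  gcongr

theorem indep_three_subspaces_konig_blocks_general (W : ι → Submodule K V)
    [∀ m, FiniteDimensional K (W m)] {g : ℕ} (hg : IsGreatest (indepTransversalSizes W) g) :
    g = univ.inf' univ_nonempty (konigValue W) ∧
      ∃ I, g = konigValue W I ∧ ∀ a, a ∈ I ↔ W a ≤ ⨆ m ∈ I, W m := by
  have hmin := hg.unique (isGreatest_indepTransversalSizes W)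
  refine ⟨hmin, ?_⟩
  obtain ⟨I, -, hI⟩ := exists_mem_eq_inf' univ_nonempty (konigValue W)
  obtain ⟨J, hJI, hJ⟩ := exists_closed_konigValue_le W I
  have hgJ := le_konigValue_of_mem_indepTransversalSizes hg.1 J
  exact ⟨J, hgJ.antisymm (hJI.trans (hI.symm.trans hmin.symm).le), hJ⟩

end Konig

section Blocks

open Finset

theorem exists_embedding_comp_eq_iff {α β κ : Type*} [Fintype α] [Fintype β] [DecidableEq κ]
    (c : α → κ) (d : β → κ) :
    (∃ e : α ↪ β, ∀ a, d (e a) = c a) ↔ ∀ s, #{a | c a = s} ≤ #{b | d b = s} := by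
  constructor
  · rintro ⟨e, he⟩ s
    exact card_le_card_of_injOn e (fun a ha ↦ by simpa [he] using ha) e.injective.injOn
  · intro h
    have hfiber (s : κ) : Nonempty ({a // c a = s} ↪ {b // d b = s}) :=
      Function.Embedding.nonempty_of_card_le (by simpa only [Fintype.card_subtype] using h s)
    let f (s : κ) : {a // c a = s} ↪ {b // d b = s} := (hfiber s).some
    exact ⟨(Equiv.sigmaFiberEquiv c).symm.toEmbedding.trans
      (((Function.Embedding.refl κ).sigmaMap f).trans (Equiv.sigmaFiberEquiv d).toEmbedding),
      fun a ↦ (f (c a) ⟨a, rfl⟩).2⟩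

/-- The block of the index `m` in a list of `i` zeros, then `j` ones, then twos. -/
def blockIndex (i j : ℕ) {r : ℕ} (m : Fin r) : Fin 3 :=
  if (m : ℕ) < i then 0 else if (m : ℕ) < i + j then 1 else 2

theorem card_blockIndex_eq (i j k : ℕ) (s : Fin 3) :
    #{m : Fin (i + j + k) | blockIndex i j m = s} = ![i, j, k] s := by
  rw [card_filter, Fin.sum_univ_add, Fin.sum_univ_add]
  fin_cases s <;> simp [blockIndex, add_assoc]

variable {F V : Type*} [Field F] [AddCommGroup V] [Module F V]

theorem repeatedSubspaces_eq_comp_blockIndex (U₁ U₂ U₃ : Submodule F V) (i j : ℕ) {r : ℕ}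
    (m : Fin r) : repeatedSubspaces U₁ U₂ U₃ i j m = ![U₁, U₂, U₃] (blockIndex i j m) := by
  unfold repeatedSubspaces blockIndex
  split_ifs <;> rfl

theorem indepChoiceSet_eq_indepTransversalSizes (U₁ U₂ U₃ : Submodule F V) (i j k : ℕ) :
    indepChoiceSet U₁ U₂ U₃ i j k =
      indepTransversalSizes (repeatedSubspaces U₁ U₂ U₃ i j : Fin (i + j + k) → _) := by
  ext g
  calc g ∈ indepChoiceSet U₁ U₂ U₃ i j k
      ↔ ∃ (v : Fin g → V) (c : Fin g → Fin 3), (∀ a, v a ∈ ![U₁, U₂, U₃] (c a)) ∧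
          (∀ s, #{a | c a = s} ≤ ![i, j, k] s) ∧ LinearIndependent F v := by
        refine exists₂_congr fun v c ↦ ?_
        have hmem : (∀ a, v a ∈ ![U₁, U₂, U₃] (c a)) ↔
            ∀ s a, c a = s → v a ∈ ![U₁, U₂, U₃] s := by
          rw [forall_comm]
          simp only [forall_eq']
        rw [hmem]
        simp [Fin.forall_fin_succ, and_assoc]
    _ ↔ ∃ (v : Fin g → V) (c : Fin g → Fin 3), (∀ a, v a ∈ ![U₁, U₂, U₃] (c a)) ∧
          (∃ e : Fin g ↪ Fin (i + j + k), ∀ a, blockIndex i j (e a) = c a) ∧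
            LinearIndependent F v := by
        simp only [exists_embedding_comp_eq_iff, card_blockIndex_eq]
    _ ↔ g ∈ indepTransversalSizes (repeatedSubspaces U₁ U₂ U₃ i j) := by
        simp only [indepTransversalSizes, repeatedSubspaces_eq_comp_blockIndex]
        constructor
        · rintro ⟨v, c, hv, ⟨e, he⟩, hli⟩
          exact ⟨e, v, fun a ↦ he a ▸ hv a, hli⟩
        · rintro ⟨e, v, hv, hli⟩
          exact ⟨v, fun a ↦ blockIndex i j (e a), hv, ⟨e, fun _ ↦ rfl⟩, hli⟩

end Blocks

/-- The vector-space König theorem applied to the multiset of `i` copies of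
`U₁`, `j` copies of `U₂`, `k` copies of `U₃`: the maximal number of linearly
independent representatives equals the König minimum, and moreover the minimum
is attained at an index set containing all or none of each repeated block. -/
theorem indep_three_subspaces_konig_blocks {F V : Type*} [Field F] [AddCommGroup V]
    [Module F V] [FiniteDimensional F V] (i j k : ℕ) (U₁ U₂ U₃ : Submodule F V)
    (g : ℕ) (hg : IsGreatest (indepChoiceSet U₁ U₂ U₃ i j k) g) :
    letI r := i + j + k
    letI W : Fin r → Submodule F V := repeatedSubspaces U₁ U₂ U₃ i j
    g = Finset.univ.inf' Finset.univ_nonempty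
        (fun I : Finset (Fin r) =>
          Module.finrank F ↥(⨆ m ∈ I, W m) + (r - I.card)) ∧
      ∃ I : Finset (Fin r),
        g = Module.finrank F ↥(⨆ m ∈ I, W m) + (r - I.card) ∧
        (∀ a b : Fin r, (a : ℕ) < i → (b : ℕ) < i → (a ∈ I ↔ b ∈ I)) ∧
        (∀ a b : Fin r, i ≤ (a : ℕ) → (a : ℕ) < i + j → i ≤ (b : ℕ) → (b : ℕ) < i + j →
          (a ∈ I ↔ b ∈ I)) ∧
        (∀ a b : Fin r, i + j ≤ (a : ℕ) → i + j ≤ (b : ℕ) → (a ∈ I ↔ b ∈ I)) := by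
  rw [indepChoiceSet_eq_indepTransversalSizes] at hg
  obtain ⟨hmin, I, hgI, hclosed⟩ := indep_three_subspaces_konig_blocks_general _ hg
  have hblock {a b : Fin (i + j + k)}
      (hab : repeatedSubspaces U₁ U₂ U₃ i j a = repeatedSubspaces U₁ U₂ U₃ i j b) :
      a ∈ I ↔ b ∈ I := by
    rw [hclosed a, hclosed b, hab]
  unfold konigValue at hmin hgI
  simp only [Fintype.card_fin] at hmin hgI
  refine ⟨hmin, I, hgI, fun a b ha hb ↦ hblock ?_, fun a b ha ha' hb hb' ↦ hblock ?_,
    fun a b ha hb ↦ hblock ?_⟩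
  · simp only [repeatedSubspaces, if_pos ha, if_pos hb]
  · simp only [repeatedSubspaces, if_neg ha.not_gt, if_pos ha', if_neg hb.not_gt, if_pos hb']
  · have hi {c : Fin (i + j + k)} (hc : i + j ≤ c) : ¬ (c : ℕ) < i := by omega
    simp only [repeatedSubspaces, if_neg (hi ha), if_neg ha.not_gt, if_neg (hi hb),
      if_neg hb.not_gt]
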